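/- (A new bilateral summation, the δ = 1 case.) Let q, σ, ρ, γ ∈ ℂ with 0 < |q| < 1 and |q²| < |σργ|, and assume none of σ, ρ, γ, σργ equals q^m for any integer m. Then the bilateral series converges absolutely and (1/(1 − q)) · ∑_{k=−∞}^{∞} (q²/(σργ))^k · (σ;q)_k (ρ;q)_k (γ;q)_k / ((q²/σ;q)_k (q²/ρ;q)_k (q²/γ;q)_k) = (q²;q)_∞ (q²/(σρ);q)_∞ (q²/(σγ);q)_∞ (q²/(ργ);q)_∞ / ((q²/σ;q)_∞ (q²/ρ;q)_∞ (q²/γ;q)_∞ (q²/(σργ);q)_∞). -/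

import Mathlib

/-- The finite q-Pochhammer symbol `(a;q)_k = ∏_{i=0}^{k-1} (1 - a qⁱ)`. -/
noncomputable def qPoch (a q : ℂ) (k : ℕ) : ℂ :=
  ∏ i ∈ Finset.range k, (1 - a * q ^ i)

/-- The infinite q-Pochhammer symbol `(a;q)_∞ = ∏_{i=0}^{∞} (1 - a qⁱ)`. -/
noncomputable def qPochInf (a q : ℂ) : ℂ :=
  ∏' i : ℕ, (1 - a * q ^ i)

/-- The q-Pochhammer symbol extended to an arbitrary integer index:
`(a;q)_k = (a;q)_∞ / (a q^k;q)_∞`. -/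
noncomputable def qPochInt (a q : ℂ) (k : ℤ) : ℂ :=
  qPochInf a q / qPochInf (a * q ^ k) q

/-!
The reflection `k ↦ -(k + 1)` multiplies the bilateral summand by `-q ^ (2 * k + 1)`, so the two
halves of the bilateral series fold into one unilateral series with the very-well-poised factor
`1 - q ^ (2 * k + 1)`: Rogers' nonterminating `₆φ₅` series with base `a = q`.

Rogers' series is summed for every base. A telescoping certificate gives a contiguous relation
between the values at the inverse parameter `D` and at `q * D`; iterating it sends `D` to `0`. The
unknown value at `D = 0` is eliminated by comparison with `D = 1`, where only the first term of the
series survives.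
-/

open Filter Finset Topology

section RatioProducts

variable {𝕜 : Type*} [NormedField 𝕜] [CompleteSpace 𝕜]

lemma summable_prod_range_of_tendsto {r : ℕ → 𝕜} {l : 𝕜} (hl : ‖l‖ < 1)
    (hr : Tendsto r atTop (𝓝 l)) : Summable fun k ↦ ∏ i ∈ range k, r i := by
  obtain ⟨ρ, hlρ, hρ⟩ := exists_between hl
  refine summable_of_ratio_norm_eventually_le hρ ?_
  filter_upwards [hr.norm.eventually (gt_mem_nhds hlρ)] with k hk
  rw [prod_range_succ, norm_mul, mul_comm]
  gcongr

/-- Joint convergence of the ratios makes them uniformly small for `x` near `x₀` and large `i`, so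
that a single convergent series dominates. -/
lemma continuousAt_tsum_mul_prod_range {X : Type*} [TopologicalSpace X] {c : ℕ → 𝕜}
    {r : ℕ → X → 𝕜} {l : 𝕜} {x₀ : X} {M : ℝ} (hl : ‖l‖ < 1) (hc : ∀ k, ‖c k‖ ≤ M)
    (hcont : ∀ i, ContinuousAt (r i) x₀)
    (hr : Tendsto (fun p : ℕ × X ↦ r p.1 p.2) (atTop ×ˢ 𝓝 x₀) (𝓝 l)) :
    ContinuousAt (fun x ↦ ∑' k, c k * ∏ i ∈ range k, r i x) x₀ := by
  obtain ⟨ρ, hlρ, hρ⟩ := exists_between hl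
  obtain ⟨P, hP, U, hU, hPU⟩ :=
    eventually_prod_iff.mp (hr.norm.eventually (gt_mem_nhds hlρ))
  obtain ⟨K, hK⟩ := eventually_atTop.mp hP
  let R : ℕ → ℝ := fun i ↦ if i < K then ‖r i x₀‖ + 1 else ρ
  have hR : Tendsto R atTop (𝓝 ρ) := by
    refine tendsto_const_nhds.congr' ?_
    filter_upwards [eventually_ge_atTop K] with i hi
    exact (if_neg hi.not_gt).symm
  have hρ' : ‖ρ‖ < 1 := by
    rwa [Real.norm_of_nonneg ((norm_nonneg l).trans hlρ.le)]
  have hhead : ∀ᶠ x in 𝓝 x₀, ∀ i ∈ range K, ‖r i x‖ < ‖r i x₀‖ + 1 :=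
    (eventually_all_finset _).mpr fun i _ ↦ (hcont i).norm.eventually_lt_const (lt_add_one _)
  have hrR : ∀ᶠ x in 𝓝 x₀, ∀ i, ‖r i x‖ ≤ R i := by
    filter_upwards [hhead, hU] with x hx hUx i
    by_cases hi : i < K
    · simpa only [R, if_pos hi] using (hx i (mem_range.mpr hi)).le
    · simpa only [R, if_neg hi] using (hPU (hK i (not_lt.mp hi)) hUx).le
  refine tendsto_tsum_of_dominated_convergence
    ((summable_prod_range_of_tendsto hρ' hR).mul_left M)
    (fun k ↦ (tendsto_finsetProd _ fun i _ ↦ hcont i).const_mul _) ?_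
  filter_upwards [hrR] with x hx k
  rw [norm_mul, norm_prod]
  exact mul_le_mul (hc k) (prod_le_prod (fun _ _ ↦ norm_nonneg _) fun i _ ↦ hx i)
    (prod_nonneg fun _ _ ↦ norm_nonneg _) ((norm_nonneg _).trans (hc k))

end RatioProducts

section Powers

variable {𝕜 : Type*} [NormedField 𝕜] {q : 𝕜}

lemma tendsto_comp_pow_of_continuousAt {X : Type*} [TopologicalSpace X] {g : 𝕜 → X}
    (hq : ‖q‖ < 1) (hg : ContinuousAt g 0) : Tendsto (fun k : ℕ ↦ g (q ^ k)) atTop (𝓝 (g 0)) :=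
  hg.tendsto.comp (tendsto_pow_atTop_nhds_zero_of_norm_lt_one hq)

lemma summable_comp_pow_mul [CompleteSpace 𝕜] {f : ℕ → 𝕜} {g : 𝕜 → 𝕜}
    (hf : Summable fun k ↦ ‖f k‖) (hq : ‖q‖ < 1) (hg : ContinuousAt g 0) :
    Summable fun k ↦ g (q ^ k) * f k := by
  simpa only [mul_comm] using hf.mul_tendsto_const
    (Nat.cofinite_eq_atTop ▸ tendsto_comp_pow_of_continuousAt hq hg)

lemma pow_succ_ne_one_of_norm_lt_one (hq : ‖q‖ < 1) (i : ℕ) : q ^ (i + 1) ≠ 1 := fun h ↦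
  (pow_lt_one₀ (norm_nonneg q) hq i.succ_ne_zero).ne (by rw [← norm_pow, h, norm_one])

end Powers

section Pochhammer

variable {q : ℂ} (a : ℂ)

lemma summable_norm_neg_mul_pow (hq : ‖q‖ < 1) : Summable fun i : ℕ ↦ ‖-(a * q ^ i)‖ := by
  simpa only [norm_neg] using ((summable_geometric_of_norm_lt_one hq).mul_left a).norm

lemma multipliable_one_sub_mul_pow (hq : ‖q‖ < 1) : Multipliable fun i : ℕ ↦ 1 - a * q ^ i := by
  simpa only [sub_eq_add_neg] using
    multipliable_one_add_of_summable (summable_norm_neg_mul_pow a hq)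

lemma tendsto_qPoch (hq : ‖q‖ < 1) : Tendsto (qPoch a q) atTop (𝓝 (qPochInf a q)) :=
  (multipliable_one_sub_mul_pow a hq).tendsto_prod_tprod_nat

lemma qPochInf_eq_one_sub_mul (hq : ‖q‖ < 1) :
    qPochInf a q = (1 - a) * qPochInf (a * q) q := by
  have hshift : (fun i : ℕ ↦ 1 - a * q ^ (i + 1)) = fun i ↦ 1 - a * q * q ^ i := by
    funext i; ring
  rw [qPochInf, tprod_eq_zero_mul' (hshift ▸ multipliable_one_sub_mul_pow (a * q) hq), hshift,
    pow_zero, mul_one, qPochInf]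

variable {a}

lemma qPochInf_ne_zero (hq : ‖q‖ < 1) (ha : ∀ i : ℕ, a * q ^ i ≠ 1) : qPochInf a q ≠ 0 := by
  simpa only [qPochInf, sub_eq_add_neg] using
    tprod_one_add_ne_zero_of_summable (f := fun i : ℕ ↦ -(a * q ^ i))
      (fun i ↦ by simpa only [← sub_eq_add_neg] using sub_ne_zero.mpr (ha i).symm)
      (summable_norm_neg_mul_pow a hq)

lemma qPochInf_ne_zero_of_norm_lt_one (hq : ‖q‖ < 1) (ha : ‖a‖ < 1) : qPochInf a q ≠ 0 := by
  refine qPochInf_ne_zero hq fun i h ↦ ?_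
  have hlt : ‖a * q ^ i‖ < 1 := by
    rw [norm_mul, norm_pow]
    exact mul_lt_one_of_nonneg_of_lt_one_left (norm_nonneg a) ha
      (pow_le_one₀ (norm_nonneg q) hq.le)
  exact hlt.ne (by rw [h, norm_one])

lemma qPochInt_zero (hq : ‖q‖ < 1) (ha : ∀ i : ℕ, a * q ^ i ≠ 1) : qPochInt a q 0 = 1 := by
  rw [qPochInt, zpow_zero, mul_one, div_self (qPochInf_ne_zero hq ha)]

lemma qPochInt_add_one (hq₀ : q ≠ 0) (hq : ‖q‖ < 1) {k : ℤ} (ha : a * q ^ k ≠ 1) :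
    qPochInt a q (k + 1) = qPochInt a q k * (1 - a * q ^ k) := by
  rw [qPochInt, qPochInt, qPochInf_eq_one_sub_mul (a * q ^ k) hq, mul_assoc a,
    ← zpow_add_one₀ hq₀]
  have : 1 - a * q ^ k ≠ 0 := sub_ne_zero.mpr ha.symm
  field_simp

end Pochhammer

section Rogers

/-- The part of the term ratio of the very-well-poised `₆φ₅` series, with base `a` and numerator
parameters `1 / B`, `1 / C`, `1 / D`, that does not involve `D`, as a function of `x = q ^ k`.
Inverse parameters turn the confluent case `D = 0` into an ordinary value. -/
noncomputable def rogersBaseRatio (q a B C x : ℂ) : ℂ :=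
  (1 - a * x) / (1 - q * x) *
    (a * q * (B - x) * (C - x) / ((1 - a * q * B * x) * (1 - a * q * C * x)))

/-- The `k`-th coefficient `(a, b, c, d; q)_k / (q, aq/b, aq/c, aq/d; q)_k * (aq / (bcd)) ^ k` of
Rogers' series, where `B = 1 / b`, `C = 1 / c`, `D = 1 / d`. -/
noncomputable def rogersWeight (q a B C D : ℂ) (k : ℕ) : ℂ :=
  ∏ i ∈ range k, rogersBaseRatio q a B C (q ^ i) * ((D - q ^ i) / (1 - a * q * D * q ^ i))

/-- The `k`-th term of Rogers' very-well-poised `₆φ₅` series, multiplied by `1 - a`. -/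
noncomputable def rogersTerm (q a B C D : ℂ) (k : ℕ) : ℂ :=
  (1 - a * (q ^ k) ^ 2) * rogersWeight q a B C D k

variable {q a B C D : ℂ}

lemma rogersWeight_succ (q a B C D : ℂ) (k : ℕ) :
    rogersWeight q a B C D (k + 1) = rogersWeight q a B C D k *
      (rogersBaseRatio q a B C (q ^ k) * ((D - q ^ k) / (1 - a * q * D * q ^ k))) :=
  prod_range_succ _ _

lemma continuousAt_rogersBaseRatio_zero (q a B C : ℂ) :
    ContinuousAt (rogersBaseRatio q a B C) 0 := by
  unfold rogersBaseRatio
  exact .mul (.div (by fun_prop) (by fun_prop) (by simp))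
    (.div (by fun_prop) (by fun_prop) (by simp))

lemma summable_rogersWeight (hq : ‖q‖ < 1) (hz : ‖a * q * B * C * D‖ < 1) :
    Summable (rogersWeight q a B C D) := by
  refine summable_prod_range_of_tendsto hz ?_
  have hcont : ContinuousAt
      (fun x ↦ rogersBaseRatio q a B C x * ((D - x) / (1 - a * q * D * x))) 0 :=
    (continuousAt_rogersBaseRatio_zero q a B C).mul (.div (by fun_prop) (by fun_prop) (by simp))
  simpa [rogersBaseRatio] using tendsto_comp_pow_of_continuousAt hq hcont

lemma summable_rogersTerm (hq : ‖q‖ < 1) (h : Summable (rogersWeight q a B C D)) :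
    Summable (rogersTerm q a B C D) :=
  summable_comp_pow_mul h.norm hq (g := fun x ↦ 1 - a * x ^ 2) (by fun_prop)

lemma rogersWeight_one_succ (q a B C : ℂ) (k : ℕ) : rogersWeight q a B C 1 (k + 1) = 0 :=
  prod_eq_zero (mem_range.mpr k.succ_pos) (by simp)

lemma summable_rogersWeight_one (q a B C : ℂ) : Summable (rogersWeight q a B C 1) :=
  (summable_nat_add_iff 1).mp (by simpa only [rogersWeight_one_succ] using summable_zero)

lemma tsum_rogersTerm_one (q a B C : ℂ) : ∑' k, rogersTerm q a B C 1 k = 1 - a := by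
  rw [tsum_eq_single 0]
  · simp [rogersTerm, rogersWeight]
  · intro k hk
    obtain ⟨n, rfl⟩ := Nat.exists_eq_succ_of_ne_zero hk
    rw [rogersTerm, rogersWeight_one_succ, mul_zero]

/-- The factor, as a function of `x = q ^ k`, relating the weights for `q * D` and `D`. -/
noncomputable def rogersShift (q a B C D x : ℂ) : ℂ :=
  rogersBaseRatio q a B C x *
    ((q * D - 1) * x * (1 - a * q * D) / ((1 - a * q * D * x) * (1 - a * q * D * (q * x))))

lemma rogersWeight_mul_succ (hD : a * q * D ≠ 1) (k : ℕ) :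
    rogersWeight q a B C (q * D) (k + 1) =
      rogersShift q a B C D (q ^ k) * rogersWeight q a B C D k := by
  induction k with
  | zero =>
    have hD' : 1 - a * q * D ≠ 0 := sub_ne_zero.mpr hD.symm
    simp only [rogersWeight, rogersShift, zero_add, prod_range_one, prod_range_zero, pow_zero,
      mul_one]
    rw [mul_comm (q * D - 1), mul_div_mul_left _ _ hD']
    ring_nf
  | succ k ih =>
    rw [rogersWeight_succ, ih, rogersWeight_succ, rogersShift, rogersShift, pow_succ']
    simp only [div_eq_mul_inv, mul_inv]
    ring

lemma summable_rogersWeight_mul (hq : ‖q‖ < 1) (hD : a * q * D ≠ 1)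
    (h : Summable (rogersWeight q a B C D)) : Summable (rogersWeight q a B C (q * D)) := by
  have hcont : ContinuousAt (rogersShift q a B C D) 0 :=
    (continuousAt_rogersBaseRatio_zero q a B C).mul (.div (by fun_prop) (by fun_prop) (by simp))
  refine (summable_nat_add_iff 1).mp ?_
  simpa only [rogersWeight_mul_succ hD] using summable_comp_pow_mul h.norm hq hcont

/-- The certificate, as a function of `x = q ^ k`, of the telescoping identity behind the
contiguous relation `D ↦ q * D`. -/
noncomputable def rogersCertificate (q a B C D x : ℂ) : ℂ :=
  -(a * q * D * (1 - a * q * D) * (1 - a * x) * (B - x) * (C - x) / (1 - a * q * D * x))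

lemma rogersCertificate_sub {x : ℂ} (hx : q * x ≠ 1) (hB : a * q * B * x ≠ 1)
    (hC : a * q * C * x ≠ 1) (hD : a * q * D * x ≠ 1) (hDq : a * q * D * (q * x) ≠ 1) :
    rogersCertificate q a B C D (q * x) *
          (rogersBaseRatio q a B C x * ((D - x) / (1 - a * q * D * x))) -
        rogersCertificate q a B C D x =
      (1 - a * (q * x) ^ 2) * ((1 - a * q * D) * (1 - a * q * B * C * D) *
          (rogersBaseRatio q a B C x * ((D - x) / (1 - a * q * D * x))) -
        (1 - a * q * B * D) * (1 - a * q * C * D) * rogersShift q a B C D x) := by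
  rw [← sub_ne_zero, ← neg_ne_zero, neg_sub] at hx hB hC hD hDq
  have hfactor : rogersCertificate q a B C D x = rogersBaseRatio q a B C x *
      -(D * (1 - a * q * D) * (1 - q * x) * (1 - a * q * B * x) * (1 - a * q * C * x) /
        (1 - a * q * D * x)) := by
    rw [rogersCertificate, rogersBaseRatio]
    generalize 1 - q * x = s, 1 - a * q * B * x = t, 1 - a * q * C * x = u at hx hB hC ⊢
    field_simp
  rw [hfactor, rogersCertificate, rogersShift]
  generalize rogersBaseRatio q a B C x = R
  generalize 1 - a * q * D * x = v, hw : 1 - a * q * D * (q * x) = w at hD hDq ⊢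
  field_simp
  rw [← hw]
  ring

lemma rogersTerm_sub_rogersTerm_mul_succ (hq : ‖q‖ < 1) (hB : ∀ i : ℕ, a * q * B * q ^ i ≠ 1)
    (hC : ∀ i : ℕ, a * q * C * q ^ i ≠ 1) (hD : ∀ i : ℕ, a * q * D * q ^ i ≠ 1) (k : ℕ) :
    (1 - a * q * D) * (1 - a * q * B * C * D) * rogersTerm q a B C D (k + 1) -
        (1 - a * q * B * D) * (1 - a * q * C * D) * rogersTerm q a B C (q * D) (k + 1) =
      rogersCertificate q a B C D (q ^ (k + 1)) * rogersWeight q a B C D (k + 1) -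
        rogersCertificate q a B C D (q ^ k) * rogersWeight q a B C D k := by
  have hcert := rogersCertificate_sub (pow_succ' q k ▸ pow_succ_ne_one_of_norm_lt_one hq k)
    (hB k) (hC k) (hD k) (pow_succ' q k ▸ hD (k + 1))
  rw [rogersTerm, rogersTerm, rogersWeight_mul_succ (by simpa using hD 0), rogersWeight_succ,
    pow_succ' q k]
  linear_combination -rogersWeight q a B C D k * hcert

lemma sum_rogersTerm_sub_rogersTerm_mul (hq : ‖q‖ < 1) (hB : ∀ i : ℕ, a * q * B * q ^ i ≠ 1)
    (hC : ∀ i : ℕ, a * q * C * q ^ i ≠ 1) (hD : ∀ i : ℕ, a * q * D * q ^ i ≠ 1) (n : ℕ) :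
    ∑ k ∈ range (n + 1), ((1 - a * q * D) * (1 - a * q * B * C * D) * rogersTerm q a B C D k -
        (1 - a * q * B * D) * (1 - a * q * C * D) * rogersTerm q a B C (q * D) k) =
      rogersCertificate q a B C D (q ^ n) * rogersWeight q a B C D n := by
  induction n with
  | zero =>
    have hD' : 1 - a * q * D ≠ 0 := by simpa using sub_ne_zero.mpr (hD 0).symm
    simp only [zero_add, sum_range_one, rogersTerm, rogersWeight, rogersCertificate,
      prod_range_zero, pow_zero, mul_one, one_pow]
    field_simp
    ring
  | succ n ih =>
    rw [sum_range_succ, ih, rogersTerm_sub_rogersTerm_mul_succ hq hB hC hD, add_sub_cancel]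

lemma tsum_rogersTerm_contiguous (hq : ‖q‖ < 1) (hB : ∀ i : ℕ, a * q * B * q ^ i ≠ 1)
    (hC : ∀ i : ℕ, a * q * C * q ^ i ≠ 1) (hD : ∀ i : ℕ, a * q * D * q ^ i ≠ 1)
    (h : Summable (rogersWeight q a B C D)) :
    (1 - a * q * D) * (1 - a * q * B * C * D) * ∑' k, rogersTerm q a B C D k =
      (1 - a * q * B * D) * (1 - a * q * C * D) * ∑' k, rogersTerm q a B C (q * D) k := by
  have hD₀ : a * q * D ≠ 1 := by simpa using hD 0
  have hsum := (summable_rogersTerm hq h).hasSum.mul_left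
    ((1 - a * q * D) * (1 - a * q * B * C * D))
  have hsum' := (summable_rogersTerm hq (summable_rogersWeight_mul hq hD₀ h)).hasSum.mul_left
    ((1 - a * q * B * D) * (1 - a * q * C * D))
  have hpartial := (hsum.sub hsum').tendsto_sum_nat.comp (tendsto_add_atTop_nat 1)
  have hcert : Tendsto
      (fun n ↦ rogersCertificate q a B C D (q ^ n) * rogersWeight q a B C D n) atTop (𝓝 0) := by
    have hcont : ContinuousAt (rogersCertificate q a B C D) 0 :=
      (ContinuousAt.div (by fun_prop) (by fun_prop) (by simp)).neg
    simpa only [mul_zero] using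
      (tendsto_comp_pow_of_continuousAt hq hcont).mul h.tendsto_atTop_zero
  refine sub_eq_zero.mp (tendsto_nhds_unique hpartial (hcert.congr fun n ↦ ?_))
  exact (sum_rogersTerm_sub_rogersTerm_mul hq hB hC hD n).symm

lemma qPoch_mul_tsum_rogersTerm (hq : ‖q‖ < 1) (hB : ∀ i : ℕ, a * q * B * q ^ i ≠ 1)
    (hC : ∀ i : ℕ, a * q * C * q ^ i ≠ 1) (hD : ∀ i : ℕ, a * q * D * q ^ i ≠ 1)
    (h : Summable (rogersWeight q a B C D)) (N : ℕ) :
    qPoch (a * q * D) q N * qPoch (a * q * B * C * D) q N * ∑' k, rogersTerm q a B C D k =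
      qPoch (a * q * B * D) q N * qPoch (a * q * C * D) q N *
        ∑' k, rogersTerm q a B C (q ^ N * D) k := by
  have hDN (n i : ℕ) : a * q * (q ^ n * D) * q ^ i ≠ 1 := by
    convert hD (n + i) using 1; ring
  have hsum (n : ℕ) : Summable (rogersWeight q a B C (q ^ n * D)) := by
    induction n with
    | zero => simpa using h
    | succ n ih =>
      simpa only [pow_succ', mul_assoc] using
        summable_rogersWeight_mul hq (by simpa using hDN n 0) ih
  induction N with
  | zero => simp [qPoch]
  | succ N ih =>
    have hstep := tsum_rogersTerm_contiguous hq hB hC (hDN N) (hsum N)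
    rw [← mul_assoc q, ← pow_succ'] at hstep
    simp only [qPoch, prod_range_succ] at ih ⊢
    linear_combination (1 - a * q * D * q ^ N) * (1 - a * q * B * C * D * q ^ N) * ih +
      (∏ i ∈ range N, (1 - a * q * B * D * q ^ i)) *
        (∏ i ∈ range N, (1 - a * q * C * D * q ^ i)) * hstep

lemma continuousAt_tsum_rogersTerm_zero (hq : ‖q‖ < 1) :
    ContinuousAt (fun D ↦ ∑' k, rogersTerm q a B C D k) 0 := by
  have hbdd : BddAbove (Set.range fun k : ℕ ↦ ‖1 - a * (q ^ k) ^ 2‖) :=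
    (tendsto_comp_pow_of_continuousAt hq (g := fun x ↦ 1 - a * x ^ 2)
      (by fun_prop)).norm.bddAbove_range
  obtain ⟨M, hM⟩ := hbdd
  have hfactor (x : ℂ) : ContinuousAt (fun p : ℂ × ℂ ↦ (p.2 - p.1) / (1 - a * q * p.2 * p.1))
      (x, 0) := .div (by fun_prop) (by fun_prop) (by simp)
  refine continuousAt_tsum_mul_prod_range (l := 0) (by simp) (fun k ↦ hM ⟨k, rfl⟩) (fun i ↦ ?_) ?_
  · exact continuousAt_const.mul
      ((hfactor (q ^ i)).comp (f := fun D : ℂ ↦ (q ^ i, D)) (by fun_prop))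
  · have hbase : ContinuousAt (fun p : ℂ × ℂ ↦ rogersBaseRatio q a B C p.1) (0, 0) :=
      ContinuousAt.comp (x := ((0 : ℂ), (0 : ℂ))) (f := Prod.fst)
        (continuousAt_rogersBaseRatio_zero q a B C) continuousAt_fst
    have hpow : Tendsto (fun p : ℕ × ℂ ↦ (q ^ p.1, p.2)) (atTop ×ˢ 𝓝 0) (𝓝 ((0 : ℂ), (0 : ℂ))) := by
      rw [nhds_prod_eq]
      exact (tendsto_pow_atTop_nhds_zero_of_norm_lt_one hq).prodMap tendsto_id
    have hratio : ContinuousAt (fun p : ℂ × ℂ ↦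
        rogersBaseRatio q a B C p.1 * ((p.2 - p.1) / (1 - a * q * p.2 * p.1))) (0, 0) :=
      hbase.mul (hfactor 0)
    simpa [Function.comp_def] using hratio.tendsto.comp hpow

lemma qPochInf_mul_tsum_rogersTerm (hq : ‖q‖ < 1) (hB : ∀ i : ℕ, a * q * B * q ^ i ≠ 1)
    (hC : ∀ i : ℕ, a * q * C * q ^ i ≠ 1) (hD : ∀ i : ℕ, a * q * D * q ^ i ≠ 1)
    (h : Summable (rogersWeight q a B C D)) :
    qPochInf (a * q * D) q * qPochInf (a * q * B * C * D) q * ∑' k, rogersTerm q a B C D k =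
      qPochInf (a * q * B * D) q * qPochInf (a * q * C * D) q * ∑' k, rogersTerm q a B C 0 k := by
  have hpow : Tendsto (fun N : ℕ ↦ q ^ N * D) atTop (𝓝 0) := by
    simpa using (tendsto_pow_atTop_nhds_zero_of_norm_lt_one hq).mul_const D
  refine tendsto_nhds_unique
    (((tendsto_qPoch (a * q * D) hq).mul (tendsto_qPoch (a * q * B * C * D) hq)).mul_const _)
    ((((tendsto_qPoch (a * q * B * D) hq).mul (tendsto_qPoch (a * q * C * D) hq)).mul
      ((continuousAt_tsum_rogersTerm_zero hq).tendsto.comp hpow)).congr fun N ↦ ?_)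
  exact (qPoch_mul_tsum_rogersTerm hq hB hC hD h N).symm

theorem rogers_sum (hq : ‖q‖ < 1) (ha : ∀ i : ℕ, a * q * q ^ i ≠ 1)
    (hB : ∀ i : ℕ, a * q * B * q ^ i ≠ 1) (hC : ∀ i : ℕ, a * q * C * q ^ i ≠ 1)
    (hD : ∀ i : ℕ, a * q * D * q ^ i ≠ 1) (h : Summable (rogersWeight q a B C D)) :
    qPochInf (a * q * B) q * qPochInf (a * q * C) q * qPochInf (a * q * D) q *
        qPochInf (a * q * B * C * D) q * ∑' k, rogersTerm q a B C D k =
      (1 - a) * qPochInf (a * q) q * qPochInf (a * q * B * C) q * qPochInf (a * q * B * D) q *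
        qPochInf (a * q * C * D) q := by
  have hD₀ := qPochInf_mul_tsum_rogersTerm hq hB hC hD h
  have hone := qPochInf_mul_tsum_rogersTerm hq hB hC (D := 1) (by simpa using ha)
    (summable_rogersWeight_one q a B C)
  simp only [tsum_rogersTerm_one, mul_one] at hone
  linear_combination qPochInf (a * q * B) q * qPochInf (a * q * C) q * hD₀ -
    qPochInf (a * q * B * D) q * qPochInf (a * q * C * D) q * hone

end Rogers

section Bilateral

/-- The factor `(a; q)_k / (a ^ k * (q ^ 2 / a; q)_k)` contributed by one parameter to the bilateral
series. -/
noncomputable def bilateralFactor (q a : ℂ) (k : ℤ) : ℂ :=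
  qPochInt a q k / (a ^ k * qPochInt (q ^ 2 / a) q k)

variable {q a : ℂ}

lemma mul_zpow_ne_one (ha : ∀ m : ℤ, a ≠ q ^ m) (k : ℤ) : a * q ^ k ≠ 1 := fun h ↦
  ha (-k) (by rw [zpow_neg]; exact eq_inv_of_mul_eq_one_left h)

lemma sq_div_mul_zpow_ne_one (hq₀ : q ≠ 0) (ha₀ : a ≠ 0) (ha : ∀ m : ℤ, a ≠ q ^ m) (k : ℤ) :
    q ^ 2 / a * q ^ k ≠ 1 := fun h ↦ ha (2 + k) <| by
  rw [zpow_add₀ hq₀, zpow_ofNat]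
  field_simp at h
  exact h.symm

lemma bilateralFactor_zero (hq₀ : q ≠ 0) (hq : ‖q‖ < 1) (ha₀ : a ≠ 0) (ha : ∀ m : ℤ, a ≠ q ^ m) :
    bilateralFactor q a 0 = 1 := by
  rw [bilateralFactor, qPochInt_zero hq fun i ↦ by exact_mod_cast mul_zpow_ne_one ha i,
    qPochInt_zero hq fun i ↦ by exact_mod_cast sq_div_mul_zpow_ne_one hq₀ ha₀ ha i]
  simp

lemma bilateralFactor_add_one (hq₀ : q ≠ 0) (hq : ‖q‖ < 1) (ha₀ : a ≠ 0) (ha : ∀ m : ℤ, a ≠ q ^ m)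
    (k : ℤ) : bilateralFactor q a (k + 1) =
      bilateralFactor q a k * ((a⁻¹ - q ^ k) / (1 - q * q * a⁻¹ * q ^ k)) := by
  have hnum : a⁻¹ - q ^ k = a⁻¹ * (1 - a * q ^ k) := by field_simp
  rw [bilateralFactor, bilateralFactor, qPochInt_add_one hq₀ hq (mul_zpow_ne_one ha k),
    qPochInt_add_one hq₀ hq (sq_div_mul_zpow_ne_one hq₀ ha₀ ha k), zpow_add_one₀ ha₀, hnum]
  simp only [div_eq_mul_inv, mul_inv]
  ring

lemma bilateralFactor_natCast (hq₀ : q ≠ 0) (hq : ‖q‖ < 1) (ha₀ : a ≠ 0) (ha : ∀ m : ℤ, a ≠ q ^ m)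
    (k : ℕ) : bilateralFactor q a k =
      ∏ i ∈ range k, (a⁻¹ - q ^ i) / (1 - q * q * a⁻¹ * q ^ i) := by
  induction k with
  | zero => exact bilateralFactor_zero hq₀ hq ha₀ ha
  | succ k ih =>
    rw [Nat.cast_succ, bilateralFactor_add_one hq₀ hq ha₀ ha, ih, prod_range_succ, zpow_natCast]

lemma bilateralFactor_neg_add_one (hq₀ : q ≠ 0) (hq : ‖q‖ < 1) (ha₀ : a ≠ 0)
    (ha : ∀ m : ℤ, a ≠ q ^ m) (k : ℕ) :
    bilateralFactor q a (-(k + 1)) = -(q * (q ^ k) ^ 2) * bilateralFactor q a k := by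
  have hden (m : ℤ) : 1 - q * q * a⁻¹ * q ^ m ≠ 0 := by
    simpa only [sq, div_eq_mul_inv] using
      sub_ne_zero.mpr (sq_div_mul_zpow_ne_one hq₀ ha₀ ha m).symm
  induction k with
  | zero =>
    have hrec := bilateralFactor_add_one hq₀ hq ha₀ ha (-1)
    have hratio : (a⁻¹ - q ^ (-1 : ℤ)) / (1 - q * q * a⁻¹ * q ^ (-1 : ℤ)) = -q⁻¹ := by
      rw [div_eq_iff (hden _), zpow_neg_one]
      field_simp
      ring
    rw [hratio] at hrec
    simp only [neg_add_cancel] at hrec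
    simp only [Nat.cast_zero, zero_add, pow_zero, one_pow, mul_one, hrec]
    field_simp
  | succ k ih =>
    have hrec := bilateralFactor_add_one hq₀ hq ha₀ ha (-(k + 2))
    have hratio : (a⁻¹ - q ^ (-(k + 2) : ℤ)) / (1 - q * q * a⁻¹ * q ^ (-(k + 2) : ℤ)) *
        ((a⁻¹ - q ^ k) / (1 - q * q * a⁻¹ * q ^ k)) * q ^ 2 = 1 := by
      have hpow : q * q * q ^ k * q ^ (-(k + 2) : ℤ) = 1 := by
        rw [← sq, mul_comm (q ^ 2), ← pow_add, zpow_neg]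
        exact mul_inv_cancel₀ (pow_ne_zero _ hq₀)
      have hden' : 1 - q * q * a⁻¹ * q ^ k ≠ 0 := by simpa using hden k
      rw [div_mul_div_comm, div_mul_eq_mul_div, div_eq_one_iff_eq (mul_ne_zero (hden _) hden')]
      linear_combination (1 - q * q * a⁻¹ ^ 2) * hpow
    rw [show -((k : ℤ) + 2) + 1 = -(k + 1) by ring, ih] at hrec
    rw [Nat.cast_succ, bilateralFactor_add_one hq₀ hq ha₀ ha, zpow_natCast,
      show -((k : ℤ) + 1 + 1) = -(k + 2) by ring, pow_succ]
    linear_combination (-bilateralFactor q a (-(k + 2))) * hratio -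
      ((a⁻¹ - q ^ k) / (1 - q * q * a⁻¹ * q ^ k)) * q ^ 2 * hrec

variable {σ ρ γ : ℂ}

lemma rogersWeight_self_eq_bilateralFactor (hq₀ : q ≠ 0) (hq : ‖q‖ < 1)
    (hσ₀ : σ ≠ 0) (hρ₀ : ρ ≠ 0) (hγ₀ : γ ≠ 0) (hσ : ∀ m : ℤ, σ ≠ q ^ m)
    (hρ : ∀ m : ℤ, ρ ≠ q ^ m) (hγ : ∀ m : ℤ, γ ≠ q ^ m) (k : ℕ) :
    rogersWeight q q σ⁻¹ ρ⁻¹ γ⁻¹ k =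
      (q ^ 2) ^ k * (bilateralFactor q σ k * bilateralFactor q ρ k * bilateralFactor q γ k) := by
  have hpow : (q ^ 2) ^ k = ∏ _i ∈ range k, q ^ 2 := by rw [prod_const, card_range]
  rw [rogersWeight, bilateralFactor_natCast hq₀ hq hσ₀ hσ, bilateralFactor_natCast hq₀ hq hρ₀ hρ,
    bilateralFactor_natCast hq₀ hq hγ₀ hγ, hpow, ← prod_mul_distrib, ← prod_mul_distrib,
    ← prod_mul_distrib]
  refine prod_congr rfl fun i _ ↦ ?_
  have hcancel : (1 - q * q ^ i) / (1 - q * q ^ i) = 1 :=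
    div_self (sub_ne_zero.mpr (pow_succ' q i ▸ pow_succ_ne_one_of_norm_lt_one hq i).symm)
  rw [rogersBaseRatio, hcancel]
  simp only [div_eq_mul_inv, mul_inv]
  ring

lemma hasSum_bilateralFactor (hq₀ : q ≠ 0) (hq : ‖q‖ < 1)
    (hσ₀ : σ ≠ 0) (hρ₀ : ρ ≠ 0) (hγ₀ : γ ≠ 0) (hσ : ∀ m : ℤ, σ ≠ q ^ m)
    (hρ : ∀ m : ℤ, ρ ≠ q ^ m) (hγ : ∀ m : ℤ, γ ≠ q ^ m)
    (h : Summable (rogersWeight q q σ⁻¹ ρ⁻¹ γ⁻¹)) :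
    HasSum (fun k : ℤ ↦ (q ^ 2) ^ k *
        (bilateralFactor q σ k * bilateralFactor q ρ k * bilateralFactor q γ k))
      (∑' k, rogersTerm q q σ⁻¹ ρ⁻¹ γ⁻¹ k) := by
  have hreflect : Summable fun k : ℕ ↦ -(q * (q ^ k) ^ 2) * rogersWeight q q σ⁻¹ ρ⁻¹ γ⁻¹ k :=
    summable_comp_pow_mul h.norm hq (g := fun x ↦ -(q * x ^ 2)) (by fun_prop)
  have hsplit : ∑' k, rogersTerm q q σ⁻¹ ρ⁻¹ γ⁻¹ k = ∑' k, rogersWeight q q σ⁻¹ ρ⁻¹ γ⁻¹ k +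
      ∑' k : ℕ, -(q * (q ^ k) ^ 2) * rogersWeight q q σ⁻¹ ρ⁻¹ γ⁻¹ k := by
    rw [← h.tsum_add hreflect]
    exact tsum_congr fun k ↦ by rw [rogersTerm]; ring
  rw [hsplit]
  refine .of_nat_of_neg_add_one ?_ ?_
  · convert h.hasSum using 2 with k
    rw [rogersWeight_self_eq_bilateralFactor hq₀ hq hσ₀ hρ₀ hγ₀ hσ hρ hγ, zpow_natCast]
  · convert hreflect.hasSum using 2 with k
    rw [rogersWeight_self_eq_bilateralFactor hq₀ hq hσ₀ hρ₀ hγ₀ hσ hρ hγ,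
      bilateralFactor_neg_add_one hq₀ hq hσ₀ hσ, bilateralFactor_neg_add_one hq₀ hq hρ₀ hρ,
      bilateralFactor_neg_add_one hq₀ hq hγ₀ hγ, zpow_neg, zpow_add_one₀ (pow_ne_zero 2 hq₀),
      zpow_natCast, pow_right_comm q 2 k]
    field_simp

lemma mul_bilateralFactor_eq (q σ ρ γ : ℂ) (k : ℤ) :
    (q ^ 2) ^ k * (bilateralFactor q σ k * bilateralFactor q ρ k * bilateralFactor q γ k) =
      (q ^ 2 / (σ * ρ * γ)) ^ k * (qPochInt σ q k * qPochInt ρ q k * qPochInt γ q k) /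
        (qPochInt (q ^ 2 / σ) q k * qPochInt (q ^ 2 / ρ) q k * qPochInt (q ^ 2 / γ) q k) := by
  simp only [bilateralFactor, div_zpow, mul_zpow]
  simp only [div_eq_mul_inv, mul_inv]
  ring

lemma tsum_rogersTerm_self (hq₀ : q ≠ 0) (hq : ‖q‖ < 1) (hσ₀ : σ ≠ 0) (hρ₀ : ρ ≠ 0) (hγ₀ : γ ≠ 0)
    (hσ : ∀ m : ℤ, σ ≠ q ^ m) (hρ : ∀ m : ℤ, ρ ≠ q ^ m) (hγ : ∀ m : ℤ, γ ≠ q ^ m)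
    (hz : ‖q * q * σ⁻¹ * ρ⁻¹ * γ⁻¹‖ < 1) :
    1 / (1 - q) * ∑' k, rogersTerm q q σ⁻¹ ρ⁻¹ γ⁻¹ k =
      qPochInf (q ^ 2) q * qPochInf (q ^ 2 / (σ * ρ)) q * qPochInf (q ^ 2 / (σ * γ)) q *
          qPochInf (q ^ 2 / (ρ * γ)) q /
        (qPochInf (q ^ 2 / σ) q * qPochInf (q ^ 2 / ρ) q * qPochInf (q ^ 2 / γ) q *
          qPochInf (q ^ 2 / (σ * ρ * γ)) q) := by
  have hpole {a : ℂ} (ha₀ : a ≠ 0) (ha : ∀ m : ℤ, a ≠ q ^ m) (i : ℕ) : q ^ 2 / a * q ^ i ≠ 1 :=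
    mod_cast sq_div_mul_zpow_ne_one hq₀ ha₀ ha i
  have hsum := rogers_sum (a := q) hq
    (fun i ↦ by simpa only [pow_succ', mul_assoc] using pow_succ_ne_one_of_norm_lt_one hq (i + 1))
    (by simpa only [sq, div_eq_mul_inv] using hpole hσ₀ hσ)
    (by simpa only [sq, div_eq_mul_inv] using hpole hρ₀ hρ)
    (by simpa only [sq, div_eq_mul_inv] using hpole hγ₀ hγ) (summable_rogersWeight hq hz)
  simp only [← sq, ← div_eq_mul_inv, div_div] at hsum hz
  have hq' : 1 - q ≠ 0 := by
    simpa [sub_eq_zero, eq_comm (a := (1 : ℂ))] using pow_succ_ne_one_of_norm_lt_one hq 0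
  have hσ' := qPochInf_ne_zero hq (hpole hσ₀ hσ)
  have hρ' := qPochInf_ne_zero hq (hpole hρ₀ hρ)
  have hγ' := qPochInf_ne_zero hq (hpole hγ₀ hγ)
  have hz' := qPochInf_ne_zero_of_norm_lt_one hq hz
  rw [one_div_mul_eq_div, div_eq_div_iff hq' (by positivity)]
  linear_combination hsum

end Bilateral

theorem new_bilateral_sum_delta_one_general (q σ ρ γ : ℂ) (hq0 : 0 < ‖q‖) (hq1 : ‖q‖ < 1)
    (hconv : ‖q ^ 2‖ < ‖σ * ρ * γ‖) (hσ : ∀ m : ℤ, σ ≠ q ^ m) (hρ : ∀ m : ℤ, ρ ≠ q ^ m)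
    (hγ : ∀ m : ℤ, γ ≠ q ^ m) :
    Summable (fun k : ℤ => (q ^ 2 / (σ * ρ * γ)) ^ k *
        (qPochInt σ q k * qPochInt ρ q k * qPochInt γ q k) /
        (qPochInt (q ^ 2 / σ) q k * qPochInt (q ^ 2 / ρ) q k * qPochInt (q ^ 2 / γ) q k)) ∧
    (1 / (1 - q)) * ∑' k : ℤ, (q ^ 2 / (σ * ρ * γ)) ^ k *
        (qPochInt σ q k * qPochInt ρ q k * qPochInt γ q k) /
        (qPochInt (q ^ 2 / σ) q k * qPochInt (q ^ 2 / ρ) q k * qPochInt (q ^ 2 / γ) q k)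
    = qPochInf (q ^ 2) q * qPochInf (q ^ 2 / (σ * ρ)) q * qPochInf (q ^ 2 / (σ * γ)) q *
        qPochInf (q ^ 2 / (ρ * γ)) q /
      (qPochInf (q ^ 2 / σ) q * qPochInf (q ^ 2 / ρ) q * qPochInf (q ^ 2 / γ) q *
        qPochInf (q ^ 2 / (σ * ρ * γ)) q) := by
  have hq₀ : q ≠ 0 := norm_pos_iff.mp hq0
  obtain ⟨⟨hσ₀, hρ₀⟩, hγ₀⟩ : (σ ≠ 0 ∧ ρ ≠ 0) ∧ γ ≠ 0 := by
    simpa only [norm_pos_iff, mul_ne_zero_iff] using (norm_nonneg _).trans_lt hconv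
  have hz : ‖q * q * σ⁻¹ * ρ⁻¹ * γ⁻¹‖ < 1 := by
    rw [← sq]
    simp only [← div_eq_mul_inv, div_div]
    rw [norm_div]
    exact (div_lt_one ((norm_nonneg _).trans_lt hconv)).mpr hconv
  have hsum := hasSum_bilateralFactor hq₀ hq1 hσ₀ hρ₀ hγ₀ hσ hρ hγ (summable_rogersWeight hq1 hz)
  simp only [mul_bilateralFactor_eq] at hsum
  refine ⟨hsum.summable, ?_⟩
  rw [hsum.tsum_eq, tsum_rogersTerm_self hq₀ hq1 hσ₀ hρ₀ hγ₀ hσ hρ hγ hz]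

/-- a new bilateral summation formula (the `δ = 1` case). -/
theorem new_bilateral_sum_delta_one (q σ ρ γ : ℂ)
    (hq0 : 0 < ‖q‖) (hq1 : ‖q‖ < 1)
    (hconv : ‖q ^ 2‖ < ‖σ * ρ * γ‖)
    (h : ∀ m : ℤ, σ ≠ q ^ m ∧ ρ ≠ q ^ m ∧ γ ≠ q ^ m ∧ σ * ρ * γ ≠ q ^ m) :
    Summable (fun k : ℤ => (q ^ 2 / (σ * ρ * γ)) ^ k *
        (qPochInt σ q k * qPochInt ρ q k * qPochInt γ q k) /
        (qPochInt (q ^ 2 / σ) q k * qPochInt (q ^ 2 / ρ) q k * qPochInt (q ^ 2 / γ) q k)) ∧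
    (1 / (1 - q)) * ∑' k : ℤ, (q ^ 2 / (σ * ρ * γ)) ^ k *
        (qPochInt σ q k * qPochInt ρ q k * qPochInt γ q k) /
        (qPochInt (q ^ 2 / σ) q k * qPochInt (q ^ 2 / ρ) q k * qPochInt (q ^ 2 / γ) q k)
    = qPochInf (q ^ 2) q * qPochInf (q ^ 2 / (σ * ρ)) q * qPochInf (q ^ 2 / (σ * γ)) q *
        qPochInf (q ^ 2 / (ρ * γ)) q /
      (qPochInf (q ^ 2 / σ) q * qPochInf (q ^ 2 / ρ) q * qPochInf (q ^ 2 / γ) q *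
        qPochInf (q ^ 2 / (σ * ρ * γ)) q) :=
  new_bilateral_sum_delta_one_general q σ ρ γ hq0 hq1 hconv (fun m ↦ (h m).1) (fun m ↦ (h m).2.1)
    fun m ↦ (h m).2.2.1
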